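/- Let q be the Kronig–Penney potential, let n ≥ 1, and assume Condition 1 holds for n. Then a real number λ ∈ I_n = [n² − M, n² + M] is a Dirichlet eigenvalue of L(q) if and only if the series Σ_{k=1}^∞ a_k(λ) converges and λ − n² + C_{2n} − Σ_{k=1}^∞ a_k(λ) = 0. -/

import Mathlib

open MeasureTheory Filter Asymptotics

/-- Cosine Fourier coefficients `C_k = (1/π) ∫₀^π q(x) cos(kx) dx` of a real potential. -/
noncomputable def cosCoefR (q : ℝ → ℝ) (k : ℤ) : ℝ :=
  (1 / Real.pi) * ∫ x in (0:ℝ)..Real.pi, q x * Real.cos ((k : ℝ) * x)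

/-- `λ` is a Dirichlet eigenvalue of `L(q) = −d²/dx² + q` on `[0,π]` with eigenfunction `y`:
`y` is nontrivial, `y, y′` are absolutely continuous, `−y″ + q y = λ y` a.e. and
`y(0) = y(π) = 0`.  Absolute continuity and the a.e. differential equation are expressed
in their equivalent integral form. -/
def IsDirichletEigenpair (q : ℝ → ℂ) (lam : ℂ) (y : ℝ → ℂ) : Prop :=
  ∃ g : ℝ → ℂ,
    (∃ x ∈ Set.Icc (0:ℝ) Real.pi, y x ≠ 0) ∧
    IntervalIntegrable g volume 0 Real.pi ∧
    IntervalIntegrable (fun t => (q t - lam) * y t) volume 0 Real.pi ∧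
    (∀ x ∈ Set.Icc (0:ℝ) Real.pi, y x = y 0 + ∫ t in (0:ℝ)..x, g t) ∧
    (∀ x ∈ Set.Icc (0:ℝ) Real.pi, g x = g 0 + ∫ t in (0:ℝ)..x, (q t - lam) * y t) ∧
    y 0 = 0 ∧ y Real.pi = 0

/-- `λ` is a Dirichlet eigenvalue of `L(q)` on `[0,π]`. -/
def IsDirichletEV (q : ℝ → ℂ) (lam : ℂ) : Prop :=
  ∃ y : ℝ → ℂ, IsDirichletEigenpair q lam y

/-- Condition 1 for the index `n`: `M ≤ 1/2` if `n = 1`, and `M < (2n−1)/2` if `n > 1`. -/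
def Cond1 (M : ℝ) (n : ℕ) : Prop :=
  (n = 1 → M ≤ 1 / 2) ∧ (1 < n → M < (2 * (n : ℝ) - 1) / 2)

/-- The partial sum `n_1 + ⋯ + n_{j}` of the multi-index `v = (n_1, …, n_k)`. -/
def psum {k : ℕ} (v : Fin k → ℤ) (j : Fin k) : ℤ :=
  ∑ i ∈ Finset.univ.filter (fun i => i ≤ j), v i

/-- Admissibility of a multi-index: every partial sum avoids `0` and `−2n`. -/
def adm (n : ℕ) {k : ℕ} (v : Fin k → ℤ) : Prop :=
  ∀ j : Fin k, psum v j ≠ 0 ∧ psum v j ≠ -(2 * (n : ℤ))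

instance (n : ℕ) {k : ℕ} (v : Fin k → ℤ) : Decidable (adm n v) := by
  unfold adm; infer_instance

/-- The general term of `a_k(λ)`:
`C_{n_1}⋯C_{n_k}(C_{n_1+⋯+n_k} − C_{n_1+⋯+n_k+2n}) / Π_j (λ − (n+n_1+⋯+n_j)²)`. -/
noncomputable def aTerm (C : ℤ → ℝ) (n : ℕ) (k : ℕ) (lam : ℝ) (v : Fin k → ℤ) : ℝ :=
  if adm n v then
    ((∏ i, C (v i)) * (C (∑ i, v i) - C ((∑ i, v i) + 2 * n))) /
      ∏ j, (lam - ((n : ℝ) + ((psum v j : ℤ) : ℝ))^2)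
  else 0

/-- `a_k(λ)`, the full series over `ℤ^k` of admissible multi-indices. -/
noncomputable def aSum (C : ℤ → ℝ) (n k : ℕ) (lam : ℝ) : ℝ :=
  ∑' v : Fin k → ℤ, aTerm C n k lam v

/-- The truncated sum `a_{r,k,n}(λ)`, over multi-indices with entries in `[−r, r]`. -/
noncomputable def aTrunc (C : ℤ → ℝ) (n k r : ℕ) (lam : ℝ) : ℝ :=
  ∑' v : Fin k → ℤ,
    if ∀ i, -(r : ℤ) ≤ v i ∧ v i ≤ (r : ℤ) then aTerm C n k lam v else 0

/-- `g_n(λ) = −C_{2n} + Σ_{k=1}^{s} a_{r,k,n}(λ)`. -/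
noncomputable def gFun (C : ℤ → ℝ) (n r s : ℕ) (lam : ℝ) : ℝ :=
  -C (2 * n) + ∑ k ∈ Finset.Icc 1 s, aTrunc C n k r lam

/-! ### Combinatorial part -/

lemma psum_cons_zero {k : ℕ} (v0 : ℤ) (v : Fin k → ℤ) :
    psum (Fin.cons v0 v : Fin (k+1) → ℤ) 0 = v0 := by
  unfold psum
  rw [Finset.sum_filter, Fin.sum_univ_succ]
  simp

lemma psum_cons_succ {k : ℕ} (v0 : ℤ) (v : Fin k → ℤ) (j : Fin k) :
    psum (Fin.cons v0 v : Fin (k+1) → ℤ) j.succ = v0 + psum v j := by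
  unfold psum
  rw [Finset.sum_filter, Fin.sum_univ_succ, Finset.sum_filter]
  simp

/-- general path weight with starting point `m` -/
noncomputable def pG (C s : ℤ → ℝ) (n : ℤ) (k : ℕ) (m : ℤ) (v : Fin k → ℤ) : ℝ :=
  (∏ i, C (v i)) * (C (m + ∑ i, v i - n) - C (m + ∑ i, v i + n)) * ∏ j, s (m + psum v j)

lemma pG_cons (C s : ℤ → ℝ) (n : ℤ) (k : ℕ) (m v0 : ℤ) (v : Fin k → ℤ) :
    pG C s n (k+1) m (Fin.cons v0 v) = C v0 * s (m + v0) * pG C s n k (m + v0) v := by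
  unfold pG
  rw [Fin.prod_univ_succ, Fin.sum_univ_succ, Fin.prod_univ_succ]
  simp only [psum_cons_zero, psum_cons_succ, Fin.cons_zero, Fin.cons_succ, add_assoc]
  ring

lemma pG_summable (C s : ℤ → ℝ) (n : ℤ) (B : ℝ) (hC : ∀ i, |C i| ≤ B)
    (hs : Summable (fun l => |s l|)) (k : ℕ) :
    ∃ K, 0 ≤ K ∧ ∀ m, Summable (fun v => |pG C s n k m v|) ∧ ∑' v, |pG C s n k m v| ≤ K := by
  have hB : 0 ≤ B := (abs_nonneg _).trans (hC 0)
  induction k with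
  | zero =>
    refine ⟨2 * B, by positivity, fun m => ⟨Summable.of_finite, ?_⟩⟩
    rw [tsum_fintype]
    simp only [Finset.univ_unique, Finset.sum_singleton]
    simp only [pG, Finset.univ_eq_empty, Finset.prod_empty, one_mul, mul_one]
    calc _ ≤ _ := abs_sub _ _
      _ ≤ B + B := add_le_add (hC _) (hC _)
      _ = _ := by ring
  | succ k ih =>
    obtain ⟨K, hK0, hK⟩ := ih
    refine ⟨B * K * ∑' l, |s l|, by positivity, fun m => ?_⟩
    have hsm : Summable (fun l => B * K * |s (m + l)|) :=
      (((Equiv.addLeft m).summable_iff (f := fun l => |s l|)).mpr hs).mul_left _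
    have hbd : ∀ l, ∑' v : Fin k → ℤ, |C l * s (m + l) * pG C s n k (m + l) v|
        ≤ B * K * |s (m + l)| := by
      intro l
      simp only [abs_mul]
      rw [tsum_mul_left]
      calc |C l| * |s (m + l)| * ∑' v : Fin k → ℤ, |pG C s n k (m + l) v|
          ≤ B * |s (m+l)| * K := by
            gcongr
            · exact hC l
            · exact (hK _).2
        _ = _ := by ring
    have hnn : 0 ≤ fun x : ℤ × (Fin k → ℤ) =>
        |C x.1 * s (m + x.1) * pG C s n k (m + x.1) x.2| := fun x => abs_nonneg _
    have hS1 : Summable fun l => ∑' v : Fin k → ℤ, |C l * s (m + l) * pG C s n k (m + l) v| :=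
      Summable.of_nonneg_of_le (fun l => tsum_nonneg fun v => abs_nonneg _) hbd hsm
    have hS : Summable (fun x : ℤ × (Fin k → ℤ) =>
        |C x.1 * s (m + x.1) * pG C s n k (m + x.1) x.2|) := by
      rw [summable_prod_of_nonneg hnn]
      refine ⟨fun l => ?_, hS1⟩
      simp only [abs_mul]
      exact (hK _).1.mul_left _
    have hcomp : (fun x : ℤ × (Fin k → ℤ) =>
        |C x.1 * s (m + x.1) * pG C s n k (m + x.1) x.2|) =
        (fun v => |pG C s n (k+1) m v|) ∘ (Fin.consEquiv (fun _ : Fin (k+1) => ℤ)) := by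
      funext x
      simp only [Function.comp, Fin.consEquiv, Equiv.coe_fn_mk]
      rw [pG_cons]
    constructor
    · rw [hcomp] at hS
      exact (Equiv.summable_iff _).mp hS
    · rw [← (Fin.consEquiv (fun _ : Fin (k+1) => ℤ)).tsum_eq]
      have : ∑' x : ℤ × (Fin k → ℤ), |C x.1 * s (m + x.1) * pG C s n k (m + x.1) x.2|
        ≤ B * K * ∑' l, |s l| := by
        rw [hS.tsum_prod]
        calc _ ≤ ∑' l, B * K * |s (m + l)| := hS1.tsum_le_tsum hbd hsm
          _ = _ := by rw [tsum_mul_left]; congr 1; exact (Equiv.addLeft m).tsum_eq (fun l => |s l|)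
      rw [hcomp] at this
      exact this

lemma pG_rec (C s : ℤ → ℝ) (n : ℤ) (B : ℝ) (hC : ∀ i, |C i| ≤ B)
    (hs : Summable (fun l => |s l|)) (k : ℕ) (m : ℤ) :
    ∑' v, pG C s n (k+1) m v = ∑' l, C l * s (m + l) * ∑' v, pG C s n k (m + l) v := by
  obtain ⟨K, hK0, hK⟩ := pG_summable C s n B hC hs (k+1)
  have h1 : Summable (fun v => pG C s n (k+1) m v) := (hK m).1.of_abs
  have hcomp : (fun x : ℤ × (Fin k → ℤ) =>
        C x.1 * s (m + x.1) * pG C s n k (m + x.1) x.2) =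
        (fun v => pG C s n (k+1) m v) ∘ (Fin.consEquiv (fun _ : Fin (k+1) => ℤ)) := by
      funext x
      simp only [Function.comp, Fin.consEquiv, Equiv.coe_fn_mk]
      rw [pG_cons]
  rw [← (Fin.consEquiv (fun _ : Fin (k+1) => ℤ)).tsum_eq]
  have h2 := (Equiv.summable_iff (Fin.consEquiv (fun _ : Fin (k+1) => ℤ))).mpr h1
  have h3 : ∑' x, ((fun v => pG C s n (k+1) m v) ∘ (Fin.consEquiv (fun _ : Fin (k+1) => ℤ))) x
    = ∑' l, C l * s (m + l) * ∑' v, pG C s n k (m + l) v := by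
    rw [← hcomp] at h2 ⊢
    rw [h2.tsum_prod]
    simp only [tsum_mul_left]
  exact h3

lemma pG_eq_aTerm (C : ℤ → ℝ) (n k : ℕ) (lam : ℝ) (v : Fin k → ℤ) :
    pG C (fun l => if l = (n:ℤ) ∨ l = -(n:ℤ) then 0 else (lam - (l:ℝ)^2)⁻¹) n k n v
      = aTerm C n k lam v := by
  unfold pG aTerm
  split_ifs with h
  · have : ∀ j : Fin k, (if (n:ℤ) + psum v j = (n:ℤ) ∨ (n:ℤ) + psum v j = -(n:ℤ) then (0:ℝ)
        else (lam - (((n:ℤ) + psum v j : ℤ):ℝ)^2)⁻¹) = (lam - ((n:ℝ) + (psum v j : ℝ))^2)⁻¹ := by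
      intro j
      rw [if_neg]
      · push_cast; rfl
      · have := h j
        omega
    simp only [this, Finset.prod_inv_distrib]
    rw [div_eq_mul_inv]
    congr 4
    · ring
    · ring
  · unfold adm at h
    push Not at h
    obtain ⟨j, hj⟩ := h
    refine mul_eq_zero_of_right _ (Finset.prod_eq_zero (Finset.mem_univ j) ?_)
    refine if_pos ?_
    by_cases h0 : psum v j = 0
    · left; omega
    · right; have := hj h0; omega

lemma summable_s (n : ℕ) (lam : ℝ) :
    Summable (fun l : ℤ => |(if l = (n:ℤ) ∨ l = -(n:ℤ) then 0 else (lam - (l:ℝ)^2)⁻¹ : ℝ)|) := by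
  have h := (Real.summable_one_div_int_pow (p := 2)).mpr (by norm_num)
  refine Summable.of_norm_bounded_eventually (h.mul_left 2) ?_
  obtain ⟨N, hN⟩ := exists_nat_gt (2 * |lam| + 1)
  rw [Filter.eventually_cofinite]
  refine (Set.finite_Icc (-(N:ℤ)) N).subset fun l hl => ?_
  by_contra hcon
  apply hl
  have hl1 : (N:ℤ) + 1 ≤ |l| := by
    simp only [Set.mem_Icc, not_and_or, not_le] at hcon
    rcases hcon with h | h
    · rw [abs_of_neg (by omega)]; omega
    · rw [abs_of_pos (by omega)]; omega
  have hl2 : (N:ℝ) + 1 ≤ |(l:ℝ)| := by exact_mod_cast hl1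
  have hN0 : (0:ℝ) ≤ N := by positivity
  have hl3 : 2 * |lam| + 1 < (l:ℝ)^2 := by
    rw [← sq_abs]; nlinarith [abs_nonneg lam]
  have h4 := le_abs_self lam
  have h5 := abs_nonneg lam
  rw [Real.norm_eq_abs, abs_abs]
  split_ifs
  · simp; positivity
  · rw [abs_inv, abs_of_neg (by linarith), one_div, ← div_eq_mul_inv, inv_le_comm₀ (by linarith) (by apply div_pos <;> linarith)]
    rw [inv_div]
    linarith

/-! ### Operator part -/

lemma exists_diag {ι H : Type*} [NormedAddCommGroup H] [InnerProductSpace ℂ H]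
    (b : HilbertBasis ι ℂ H) (s : ι → ℂ) (K : ℝ) (hK0 : 0 ≤ K) (hs : ∀ i, ‖s i‖ ≤ K) :
    ∃ S : H →L[ℂ] H, ‖S‖ ≤ K ∧ ∀ x i, b.repr (S x) i = s i * b.repr x i := by
  have hmem : ∀ x : lp (fun _ : ι => ℂ) 2, Memℓp (fun i => s i * x i) 2 := by
    intro x
    refine Memℓp.mono' ((lp.memℓp x).const_smul (K:ℂ)) fun i => ?_
    simp only [Pi.smul_apply, norm_mul, smul_eq_mul, Complex.norm_real, Real.norm_eq_abs, abs_of_nonneg hK0]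
    gcongr
    exact hs i
  let L : lp (fun _ : ι => ℂ) 2 →ₗ[ℂ] lp (fun _ : ι => ℂ) 2 :=
    { toFun := fun x => ⟨fun i => s i * x i, hmem x⟩
      map_add' := by intro x y; ext i; simp [mul_add]; rfl
      map_smul' := by intro c x; ext i; simp [mul_left_comm] }
  have hL : ∀ x, ‖L x‖ ≤ K * ‖x‖ := by
    intro x
    have : ‖L x‖ ≤ ‖(K:ℂ) • x‖ := by
      refine lp.norm_mono (by norm_num) fun i => ?_
      show ‖s i * x i‖ ≤ ‖(K:ℂ) * x i‖
      simp only [norm_mul, Complex.norm_real, Real.norm_eq_abs, abs_of_nonneg hK0]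
      gcongr
      exact hs i
    rwa [norm_smul, Complex.norm_real, Real.norm_eq_abs, abs_of_nonneg hK0] at this
  let S0 := L.mkContinuous K hL
  refine ⟨(b.repr.symm.toContinuousLinearEquiv : _ →L[ℂ] H) ∘L S0 ∘L (b.repr.toContinuousLinearEquiv : H →L[ℂ] _), ?_, ?_⟩
  · refine ContinuousLinearMap.opNorm_le_bound _ hK0 fun x => ?_
    have := hL (b.repr x)
    simpa [S0] using this
  · intro x i
    simp [S0, L]

lemma abstract_eq {ι H : Type*} [DecidableEq ι] [NormedAddCommGroup H] [InnerProductSpace ℂ H] [CompleteSpace H]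
    (b : HilbertBasis ι ℂ H) (Q S : H →L[ℂ] H) (s d : ι → ℂ) (i0 : ι)
    (hS : ∀ x i, b.repr (S x) i = s i * b.repr x i)
    (hs0 : s i0 = 0) (hs : ∀ i, i ≠ i0 → s i * d i = 1) (hT : ‖S * Q‖ < 1) :
    Summable (fun k : ℕ => b.repr (Q (((S * Q)^k) (b i0))) i0) ∧
    ((∃ y : H, y ≠ 0 ∧ ∀ i, d i * b.repr y i = b.repr (Q y) i) ↔
      ∑' k : ℕ, b.repr (Q (((S * Q)^k) (b i0))) i0 = d i0) := by
  set T := S * Q with hTdef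
  have hsum : Summable (fun k : ℕ => T^k) := summable_geometric_of_norm_lt_one hT
  set G := ∑' k : ℕ, T^k with hG
  have hG1 : (1 - T) * G = 1 := mul_neg_geom_series T hT
  have hG2 : G * (1 - T) = 1 := geom_series_mul_neg T hT
  have hrep : ∀ y : H, b.repr y i0 = inner ℂ (b i0) y := fun y => b.repr_apply_apply y i0
  let Φ : (H →L[ℂ] H) →L[ℂ] ℂ :=
    (innerSL ℂ (b i0)) ∘L Q ∘L (ContinuousLinearMap.apply ℂ H (b i0))
  have hΦ : ∀ A : H →L[ℂ] H, Φ A = b.repr (Q (A (b i0))) i0 := by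
    intro A; simp [Φ, hrep]
  have hHS : HasSum (fun k : ℕ => b.repr (Q ((T^k) (b i0))) i0) (b.repr (Q (G (b i0))) i0) := by
    have := hsum.hasSum.mapL Φ
    simpa only [hΦ] using this
  refine ⟨hHS.summable, ?_⟩
  rw [hHS.tsum_eq]
  have hb : ∀ i, b.repr (b i0) i = if i = i0 then 1 else 0 := by
    intro i
    rw [b.repr_self]
    simp [lp.single_apply, Pi.single_apply]
  have ext : ∀ x y : H, (∀ i, b.repr x i = b.repr y i) → x = y := by
    intro x y h
    apply b.repr.injective
    ext i
    exact h i
  constructor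
  · rintro ⟨y, hy0, hy⟩
    have h1 : (1 - T) y = (b.repr y i0) • b i0 := by
      apply ext
      intro i
      have e1 : b.repr ((1 - T) y) i = b.repr y i - s i * b.repr (Q y) i := by
        rw [← hS]
        simp [hTdef]
      have e2 : b.repr ((b.repr y i0) • b i0) i = b.repr y i0 * (if i = i0 then 1 else 0) := by
        rw [← hb]; simp
      rw [e1, e2]
      by_cases hi : i = i0
      · subst hi; simp [hs0]
      · rw [← hy, ← mul_assoc, hs i hi]; simp [hi]
    have h2 : y = (b.repr y i0) • G (b i0) := by
      have : (G * (1 - T)) y = G ((1 - T) y) := rfl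
      rw [hG2, h1, map_smul] at this
      exact this
    have h3 : b.repr y i0 ≠ 0 := by
      intro h; rw [h, zero_smul] at h2; exact hy0 h2
    have h4 : b.repr (Q y) i0 = b.repr y i0 * b.repr (Q (G (b i0))) i0 := by
      conv_lhs => rw [h2]
      simp
    have h5 := hy i0
    rw [h4, mul_comm] at h5
    exact (mul_left_cancel₀ h3 h5).symm
  · intro h
    have h1 : ∀ i, b.repr (G (b i0)) i - s i * b.repr (Q (G (b i0))) i = if i = i0 then 1 else 0 := by
      intro i
      rw [← hb, ← hS]
      have : b i0 = ((1 - T) * G) (b i0) := by rw [hG1]; rfl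
      conv_rhs => rw [this]
      simp [hTdef]
    refine ⟨G (b i0), ?_, ?_⟩
    · intro h0
      have := h1 i0
      simp [h0] at this
    · intro i
      by_cases hi : i = i0
      · subst hi
        have := h1 i
        rw [hs0] at this
        simp only [zero_mul, sub_zero, if_true] at this
        rw [this, h, mul_one]
      · have := h1 i
        rw [if_neg hi, sub_eq_zero] at this
        rw [this, ← mul_assoc, mul_comm (d i), hs i hi, one_mul]

/-! ### The Hilbert space `L²(0,π)` and the sine basis -/

/-- Lebesgue measure on `(0,π]`. -/
noncomputable abbrev mu0 : Measure ℝ := volume.restrict (Set.Ioc 0 Real.pi)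

/-- `L²(0,π)`. -/
noncomputable abbrev HH := Lp ℂ 2 mu0

lemma exists_mulOp (q0 : ℝ → ℝ) (hq : Measurable q0) (M : ℝ) (hM0 : 0 ≤ M) (hM : ∀ x, |q0 x| ≤ M) :
    ∃ Q : HH →L[ℂ] HH, ‖Q‖ ≤ M ∧ ∀ v : HH, Q v =ᵐ[mu0] fun x => (q0 x : ℂ) * v x := by
  have hmem : ∀ v : HH, MemLp (fun x => (q0 x : ℂ) * v x) 2 mu0 := by
    intro v
    refine (Lp.memLp v).of_le_mul (c := M) ?_ (Filter.Eventually.of_forall fun x => ?_)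
    · exact (Complex.measurable_ofReal.comp hq).aestronglyMeasurable.mul (Lp.aestronglyMeasurable v)
    · rw [norm_mul, Complex.norm_real, Real.norm_eq_abs]
      gcongr
      exact hM x
  let L : HH →ₗ[ℂ] HH :=
    { toFun := fun v => (hmem v).toLp _
      map_add' := by
        intro u v
        apply Lp.ext
        filter_upwards [(hmem (u+v)).coeFn_toLp, (hmem u).coeFn_toLp, (hmem v).coeFn_toLp,
          Lp.coeFn_add u v, Lp.coeFn_add ((hmem u).toLp _) ((hmem v).toLp _)] with x h1 h2 h3 h4 h5
        rw [h1, h5, Pi.add_apply, h2, h3, h4, Pi.add_apply, mul_add]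
      map_smul' := by
        intro c v
        apply Lp.ext
        filter_upwards [(hmem (c • v)).coeFn_toLp, (hmem v).coeFn_toLp,
          Lp.coeFn_smul c v, Lp.coeFn_smul c ((hmem v).toLp _)] with x h1 h2 h3 h4
        rw [h1, RingHom.id_apply, h4, Pi.smul_apply, h2, h3, Pi.smul_apply, smul_eq_mul,
          smul_eq_mul, mul_left_comm] }
  have hL : ∀ v, L v =ᵐ[mu0] fun x => (q0 x : ℂ) * v x := fun v => (hmem v).coeFn_toLp
  refine ⟨L.mkContinuous M fun v => ?_, LinearMap.mkContinuous_norm_le _ hM0 _, hL⟩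
  refine Lp.norm_le_mul_norm_of_ae_le_mul ?_
  filter_upwards [hL v] with x hx
  rw [hx, norm_mul, Complex.norm_real, Real.norm_eq_abs]
  gcongr
  exact hM x

/-- normalized sine function -/
noncomputable def sn (m : ℤ) (x : ℝ) : ℂ := ((Real.sqrt (2 / Real.pi) * Real.sin (m * x) : ℝ) : ℂ)

lemma sn_cont (m : ℤ) : Continuous (sn m) := by unfold sn; fun_prop

lemma memLp_of_contOn (f : ℝ → ℂ) (hf : ContinuousOn f (Set.Icc 0 Real.pi)) : MemLp f 2 mu0 := by
  obtain ⟨K, hK⟩ := isCompact_Icc.exists_bound_of_continuousOn hf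
  refine MemLp.of_bound ((hf.mono Set.Ioc_subset_Icc_self).aestronglyMeasurable measurableSet_Ioc) K ?_
  filter_upwards [ae_restrict_mem measurableSet_Ioc] with x hx using hK x (Set.Ioc_subset_Icc_self hx)

lemma sn_memLp (m : ℤ) : MemLp (sn m) 2 mu0 := memLp_of_contOn _ (sn_cont m).continuousOn

/-- the sine function as an element of `L²` -/
noncomputable def sL (m : ℤ) : HH := (sn_memLp m).toLp _

lemma inner_sL (m : ℤ) (v : HH) (f : ℝ → ℂ) (h : v =ᵐ[mu0] f) :
    inner ℂ (sL m) v = ∫ x in (0:ℝ)..Real.pi, sn m x * f x := by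
  rw [L2.inner_def, intervalIntegral.integral_of_le Real.pi_pos.le]
  apply integral_congr_ae
  filter_upwards [h, (sn_memLp m).coeFn_toLp] with x h1 h2
  rw [h1]
  unfold sL
  rw [h2]
  simp only [sn, RCLike.inner_apply, Complex.conj_ofReal]
  ring

lemma sn_mul_sn (q0 : ℝ → ℝ) (hq : IntervalIntegrable q0 volume 0 Real.pi) (m l : ℤ) :
    ∫ x in (0:ℝ)..Real.pi, sn m x * ((q0 x : ℂ) * sn l x) =
      ((cosCoefR q0 (m - l) - cosCoefR q0 (m + l) : ℝ) : ℂ) := by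
  have h1 : ∀ x, sn m x * ((q0 x : ℂ) * sn l x) =
      ((1 / Real.pi * (q0 x * Real.cos (((m - l : ℤ) : ℝ) * x)
        - q0 x * Real.cos (((m + l : ℤ) : ℝ) * x)) : ℝ) : ℂ) := by
    intro x
    unfold sn
    norm_cast
    have hs : Real.sqrt (2 / Real.pi) * Real.sqrt (2 / Real.pi) = 2 / Real.pi :=
      Real.mul_self_sqrt (by positivity)
    push_cast
    rw [sub_mul, add_mul, Real.cos_sub, Real.cos_add]
    calc _ = (Real.sqrt (2 / Real.pi) * Real.sqrt (2 / Real.pi)) * q0 x * Real.sin (m*x) * Real.sin (l*x) := by ring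
      _ = _ := by rw [hs]; field_simp; ring
  simp only [h1]
  rw [intervalIntegral.integral_ofReal, intervalIntegral.integral_const_mul,
    intervalIntegral.integral_sub]
  · unfold cosCoefR
    rw [mul_sub]
  · exact hq.mul_continuousOn (by fun_prop)
  · exact hq.mul_continuousOn (by fun_prop)

lemma cosCoef_one (k : ℤ) : cosCoefR (fun _ => 1) k = if k = 0 then 1 else 0 := by
  unfold cosCoefR
  split_ifs with h
  · subst h; simp; 
  · have : (k:ℝ) ≠ 0 := by exact_mod_cast h
    simp only [one_mul]
    rw [intervalIntegral.integral_comp_mul_left (fun x => Real.cos x) this]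
    simp [Real.sin_int_mul_pi]

lemma inner_sL_sL (m l : ℤ) : inner ℂ (sL m) (sL l) =
    (((if m - l = 0 then 1 else 0) - (if m + l = 0 then 1 else 0) : ℝ) : ℂ) := by
  rw [inner_sL m (sL l) (sn l) (sn_memLp l).coeFn_toLp, ← cosCoef_one, ← cosCoef_one,
    ← sn_mul_sn _ (by simp)]
  simp

lemma sL_orthonormal : Orthonormal ℂ (fun i : ℕ => sL ((i:ℤ)+1)) := by
  classical
  rw [orthonormal_iff_ite]
  intro i j
  rw [inner_sL_sL]
  rw [if_neg (show ¬ ((i:ℤ)+1+((j:ℤ)+1) = 0) by omega)]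
  by_cases h : i = j
  · subst h; simp
  · rw [if_neg (by omega), if_neg h]; simp

lemma sL_neg (m : ℤ) : sL (-m) = - sL m := by
  unfold sL
  rw [← MemLp.toLp_neg]
  congr 1
  funext x
  simp [sn]

lemma sL_complete (v : HH) (h : ∀ i : ℕ, inner ℂ (sL ((i:ℤ)+1)) v = 0) : v = 0 := by
  have hall : ∀ m : ℤ, inner ℂ (sL m) v = 0 := by
    intro m
    rcases lt_trichotomy m 0 with hm | hm | hm
    · obtain ⟨i, hi⟩ : ∃ i : ℕ, m = -((i:ℤ)+1) := ⟨(-m-1).toNat, by omega⟩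
      rw [hi, sL_neg, inner_neg_left, h, neg_zero]
    · subst hm
      have := sL_neg 0
      rw [neg_zero] at this
      have h2 : inner ℂ (sL 0) v = - inner ℂ (sL 0) v := by
        conv_lhs => rw [this]
        rw [inner_neg_left]
      exact self_eq_neg.mp h2
    · obtain ⟨i, hi⟩ : ∃ i : ℕ, m = ((i:ℤ)+1) := ⟨(m-1).toNat, by omega⟩
      rw [hi, h]
  set F : ℝ → ℂ := (Set.Ioc 0 Real.pi).indicator v with hF
  have hFm : MemLp F 2 volume := (memLp_indicator_iff_restrict measurableSet_Ioc).mpr (Lp.memLp v)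
  have hFn : MemLp (fun x => F (-x)) 2 volume :=
    hFm.comp_measurePreserving (Measure.measurePreserving_neg volume)
  set f : ℝ → ℂ := fun x => F x - F (-x) with hf
  have hfm : MemLp f 2 volume := hFm.sub hFn
  have hpi : -Real.pi < Real.pi := by linarith [Real.pi_pos]
  have hFi : IntervalIntegrable F volume (-Real.pi) Real.pi := by
    rw [intervalIntegrable_iff_integrableOn_Ioc_of_le hpi.le]
    exact (hFm.restrict _).integrable (by norm_num)
  have hFni : IntervalIntegrable (fun x => F (-x)) volume (-Real.pi) Real.pi := by
    rw [intervalIntegrable_iff_integrableOn_Ioc_of_le hpi.le]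
    exact (hFn.restrict _).integrable (by norm_num)
  have hcoef : ∀ m : ℤ, fourierCoeffOn hpi f m = 0 := by
    intro m
    rw [fourierCoeffOn_eq_integral]
    refine smul_eq_zero_of_right _ ?_
    have hfour : ∀ x : ℝ, fourier (-m) (x : AddCircle (Real.pi - -Real.pi)) =
        Complex.exp (-(m * x : ℝ) * Complex.I) := by
      intro x
      rw [fourier_coe_apply]
      congr 1
      have : (Real.pi : ℂ) ≠ 0 := by exact_mod_cast Real.pi_ne_zero
      push_cast
      field_simp
      ring
    simp only [hfour, hf, smul_eq_mul, mul_sub]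
    have hc : Continuous fun x : ℝ => Complex.exp (-(m * x : ℝ) * Complex.I) := by fun_prop
    rw [intervalIntegral.integral_sub (hFi.continuousOn_mul hc.continuousOn)
      (hFni.continuousOn_mul hc.continuousOn)]
    have e1 : ∫ x in (-Real.pi)..Real.pi, Complex.exp (-(m * x : ℝ) * Complex.I) * F (-x) =
        ∫ x in (-Real.pi)..Real.pi, Complex.exp ((m * x : ℝ) * Complex.I) * F x := by
      have := intervalIntegral.integral_comp_neg (a := -Real.pi) (b := Real.pi)
        (fun x => Complex.exp ((m * x : ℝ) * Complex.I) * F x)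
      rw [neg_neg] at this
      rw [← this]
      congr 1
      funext x
      congr 2
      push_cast; ring
    have hc2 : Continuous fun x : ℝ => Complex.exp ((m * x : ℝ) * Complex.I) := by fun_prop
    rw [e1, ← intervalIntegral.integral_sub (hFi.continuousOn_mul hc.continuousOn)
      (hFi.continuousOn_mul hc2.continuousOn)]
    have e2 : ∀ x : ℝ, Complex.exp (-(m * x : ℝ) * Complex.I) * F x -
        Complex.exp ((m * x : ℝ) * Complex.I) * F x =
        (Set.Ioc 0 Real.pi).indicator
          (fun x => (-2 * Complex.I / (Real.sqrt (2 / Real.pi) : ℝ)) * (sn m x * v x)) x := by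
      intro x
      by_cases hx : x ∈ Set.Ioc 0 Real.pi
      · rw [Set.indicator_of_mem hx, hF, Set.indicator_of_mem hx]
        have hs0 : ((Real.sqrt (2 / Real.pi) : ℝ) : ℂ) ≠ 0 := by
          have : 0 < Real.sqrt (2 / Real.pi) := Real.sqrt_pos.mpr (by positivity)
          exact_mod_cast this.ne'
        rw [Complex.exp_mul_I, Complex.exp_mul_I, Complex.cos_neg, Complex.sin_neg]
        unfold sn
        simp only [Complex.ofReal_mul, Complex.ofReal_sin]
        field_simp
        ring
      · rw [Set.indicator_of_notMem hx, hF, Set.indicator_of_notMem hx]; simp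
    simp only [e2]
    rw [intervalIntegral.integral_of_le hpi.le, setIntegral_indicator measurableSet_Ioc,
      Set.inter_eq_self_of_subset_right (Set.Ioc_subset_Ioc_left (by linarith [Real.pi_pos])),
      ← intervalIntegral.integral_of_le Real.pi_pos.le, intervalIntegral.integral_const_mul,
      ← inner_sL m v v (Filter.EventuallyEq.refl _ _), hall, mul_zero]
  have hP := hasSum_sq_fourierCoeffOn hpi (hfm.restrict _)
  simp only [hcoef, norm_zero] at hP
  have hP2 := hP.unique (show HasSum (fun _ : ℤ => (0:ℝ)^2) 0 by simp [hasSum_zero])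
  have hP3 : ∫ x in (-Real.pi)..Real.pi, ‖f x‖ ^ 2 = 0 := by
    rcases smul_eq_zero.mp hP2 with h | h
    · have := inv_eq_zero.mp h; linarith
    · exact h
  rw [intervalIntegral.integral_of_le hpi.le, integral_eq_zero_iff_of_nonneg (fun x => by positivity)
    ((hfm.restrict _).integrable_norm_pow (by norm_num))] at hP3
  apply Lp.ext
  have hP4 := ae_restrict_of_ae_restrict_of_subset
    (Set.Ioc_subset_Ioc_left (b := Real.pi) (show -Real.pi ≤ 0 by linarith [Real.pi_pos])) hP3
  filter_upwards [hP4, ae_restrict_mem measurableSet_Ioc, Lp.coeFn_zero ℂ 2 mu0] with x hx hx2 hx3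
  rw [hx3]
  have h1 : f x = 0 := by simpa using hx
  have h2 : -x ∉ Set.Ioc 0 Real.pi := fun hh => by linarith [hh.1, hx2.1]
  simp only [hf, hF] at h1
  rw [Set.indicator_of_mem hx2, Set.indicator_of_notMem h2, sub_zero] at h1
  exact h1

lemma exists_sineBasis : ∃ b : HilbertBasis ℕ ℂ HH, ∀ i : ℕ, b i = sL ((i:ℤ)+1) := by
  have hbot : (Submodule.span ℂ (Set.range (fun i : ℕ => sL ((i:ℤ)+1))))ᗮ = ⊥ := by
    rw [Submodule.eq_bot_iff]
    intro v hv
    apply sL_complete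
    intro i
    exact (Submodule.mem_orthogonal _ _).mp hv _ (Submodule.subset_span ⟨i, rfl⟩)
  refine ⟨HilbertBasis.mkOfOrthogonalEqBot sL_orthonormal hbot, fun i => ?_⟩
  rw [HilbertBasis.coe_mkOfOrthogonalEqBot]

/-! ### Integration by parts and the eigenvalue problem -/

lemma ibp_real (f ψ ψ' : ℝ → ℝ) (F0 : ℝ) (hf : IntervalIntegrable f volume 0 Real.pi)
    (hψ : ∀ x, HasDerivAt ψ (ψ' x) x) (hψ' : Continuous ψ') :
    ∫ x in (0:ℝ)..Real.pi, (F0 + ∫ t in (0:ℝ)..x, f t) * ψ' x =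
      (F0 + ∫ t in (0:ℝ)..Real.pi, f t) * ψ Real.pi - F0 * ψ 0 -
        ∫ x in (0:ℝ)..Real.pi, f x * ψ x := by
  have hd : deriv ψ = ψ' := funext fun x => (hψ x).deriv
  have hACψ : AbsolutelyContinuousOnInterval ψ 0 Real.pi := by
    refine ContDiffOn.absolutelyContinuousOnInterval (ContDiff.contDiffOn ?_)
    rw [contDiff_one_iff_deriv]
    exact ⟨fun x => (hψ x).differentiableAt, hd ▸ hψ'⟩
  have hAC : AbsolutelyContinuousOnInterval (fun x => F0 + ∫ t in (0:ℝ)..x, f t) 0 Real.pi :=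
    (ContDiffOn.absolutelyContinuousOnInterval (f := fun _ : ℝ => F0) contDiffOn_const).add
      (hf.absolutelyContinuousOnInterval_intervalIntegral (c := 0) (by simp))
  have := hAC.integral_mul_deriv_eq_deriv_mul hACψ
  rw [hd] at this
  rw [this]
  congr 1
  · simp
  · apply intervalIntegral.integral_congr_ae
    filter_upwards [hf.ae_hasDerivAt_integral] with x hx hx2
    rw [((hx (Set.uIoc_subset_uIcc hx2) 0 (by simp)).const_add F0).deriv]

lemma ibp_complex (f F : ℝ → ℂ) (ψ ψ' : ℝ → ℝ) (hf : IntervalIntegrable f volume 0 Real.pi)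
    (hF : ∀ x ∈ Set.Icc (0:ℝ) Real.pi, F x = F 0 + ∫ t in (0:ℝ)..x, f t)
    (hψ : ∀ x, HasDerivAt ψ (ψ' x) x) (hψ' : Continuous ψ') :
    ContinuousOn F (Set.Icc 0 Real.pi) ∧
    ∫ x in (0:ℝ)..Real.pi, F x * (ψ' x : ℂ) =
      F Real.pi * ψ Real.pi - F 0 * ψ 0 - ∫ x in (0:ℝ)..Real.pi, f x * (ψ x : ℂ) := by
  have hpi := Real.pi_pos
  have hc : ContinuousOn F (Set.Icc 0 Real.pi) := by
    refine ContinuousOn.congr (f := fun x => F 0 + ∫ t in (0:ℝ)..x, f t) ?_ hF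
    refine continuousOn_const.add ?_
    have := intervalIntegral.continuousOn_primitive_interval' hf (a := 0) (by simp)
    rwa [Set.uIcc_of_le hpi.le] at this
  refine ⟨hc, ?_⟩
  have hψc : Continuous ψ := continuous_iff_continuousAt.mpr fun x => (hψ x).continuousAt
  have hsub : ∀ x ∈ Set.Icc (0:ℝ) Real.pi, IntervalIntegrable f volume 0 x := fun x hx =>
    hf.mono_set (by rw [Set.uIcc_of_le hx.1, Set.uIcc_of_le hpi.le]; exact Set.Icc_subset_Icc_right hx.2)
  have hi1 : IntervalIntegrable (fun x => F x * (ψ' x : ℂ)) volume 0 Real.pi := by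
    apply ContinuousOn.intervalIntegrable
    rw [Set.uIcc_of_le hpi.le]
    exact hc.mul (Complex.continuous_ofReal.comp hψ').continuousOn
  have hi2 : IntervalIntegrable (fun x => f x * (ψ x : ℂ)) volume 0 Real.pi :=
    hf.mul_continuousOn (Complex.continuous_ofReal.comp hψc).continuousOn
  have key : ∀ (R : ℂ →L[ℝ] ℝ), (∀ (z : ℂ) (r : ℝ), R (z * (r:ℂ)) = R z * r) →
      R (∫ x in (0:ℝ)..Real.pi, F x * (ψ' x : ℂ)) =
      R (F Real.pi * ψ Real.pi - F 0 * ψ 0 - ∫ x in (0:ℝ)..Real.pi, f x * (ψ x : ℂ)) := by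
    intro R hR
    have hRf : IntervalIntegrable (fun x => R (f x)) volume 0 Real.pi :=
      ⟨R.integrable_comp hf.1, R.integrable_comp hf.2⟩
    have hRF : ∀ x ∈ Set.Icc (0:ℝ) Real.pi, R (F x) = R (F 0) + ∫ t in (0:ℝ)..x, R (f t) := by
      intro x hx
      rw [R.intervalIntegral_comp_comm (hsub x hx), hF x hx, map_add]
    have h := ibp_real (fun x => R (f x)) ψ ψ' (R (F 0)) hRf hψ hψ'
    rw [map_sub, map_sub, ← R.intervalIntegral_comp_comm hi1, ← R.intervalIntegral_comp_comm hi2]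
    simp only [hR]
    rw [hRF Real.pi ⟨hpi.le, le_refl _⟩, ← h]
    apply intervalIntegral.integral_congr
    intro x hx
    rw [Set.uIcc_of_le hpi.le] at hx
    simp only [hRF x hx]
  apply Complex.ext
  · exact key Complex.reCLM (by intro z r; simp)
  · exact key Complex.imCLM (by intro z r; simp)

lemma ibp_sine (f g y : ℝ → ℂ) (hf : IntervalIntegrable f volume 0 Real.pi)
    (hg : IntervalIntegrable g volume 0 Real.pi)
    (hgf : ∀ x ∈ Set.Icc (0:ℝ) Real.pi, g x = g 0 + ∫ t in (0:ℝ)..x, f t)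
    (hyg : ∀ x ∈ Set.Icc (0:ℝ) Real.pi, y x = y 0 + ∫ t in (0:ℝ)..x, g t)
    (hy0 : y 0 = 0) (hypi : y Real.pi = 0) (m : ℤ) :
    ∫ x in (0:ℝ)..Real.pi, sn m x * f x = -(m:ℂ)^2 * ∫ x in (0:ℝ)..Real.pi, sn m x * y x := by
  have h1 := (ibp_complex f g (fun x => Real.sin (m * x)) (fun x => m * Real.cos (m * x)) hf hgf
    (fun x => by
      have := ((hasDerivAt_id x).const_mul (m:ℝ)).sin
      simpa [mul_comm] using this) (by fun_prop)).2
  have h2 := (ibp_complex g y (fun x => Real.cos (m * x)) (fun x => -(m * Real.sin (m * x))) hg hyg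
    (fun x => by
      have := ((hasDerivAt_id x).const_mul (m:ℝ)).cos
      simpa [mul_comm] using this) (by fun_prop)).2
  simp only [hy0, hypi, Real.sin_int_mul_pi, mul_zero, Real.sin_zero, Complex.ofReal_zero, zero_mul,
    sub_zero, zero_sub] at h1 h2
  have e1 : ∀ x, sn m x * f x = (Real.sqrt (2/Real.pi) : ℂ) * (f x * (Real.sin (m*x) : ℝ)) := by
    intro x; unfold sn; push_cast; ring
  have e2 : ∀ x, sn m x * y x = (Real.sqrt (2/Real.pi) : ℂ) * (y x * (Real.sin (m*x) : ℝ)) := by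
    intro x; unfold sn; push_cast; ring
  simp only [e1, e2]
  rw [intervalIntegral.integral_const_mul, intervalIntegral.integral_const_mul]
  have e3 : ∀ x, g x * ((m * Real.cos (m*x) : ℝ) : ℂ) = m * (g x * (Real.cos (m*x) : ℝ)) := by
    intro x; push_cast; ring
  have e4 : ∀ x, y x * ((-(m * Real.sin (m*x)) : ℝ) : ℂ) = (-m) * (y x * (Real.sin (m*x) : ℝ)) := by
    intro x; push_cast; ring
  simp only [e3] at h1
  simp only [e4] at h2
  rw [intervalIntegral.integral_const_mul] at h1 h2
  linear_combination (Real.sqrt (2/Real.pi) : ℂ) * h1 - (Real.sqrt (2/Real.pi) : ℂ) * m * h2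

lemma eigen_iff (q0 : ℝ → ℝ) (hq : Measurable q0) (M : ℝ) (hM : ∀ x, |q0 x| ≤ M) (lam : ℝ)
    (Q : HH →L[ℂ] HH) (hQ : ∀ v : HH, Q v =ᵐ[mu0] fun x => (q0 x : ℂ) * v x) :
    IsDirichletEV (fun x => (q0 x : ℂ)) (lam : ℂ) ↔
      ∃ y : HH, y ≠ 0 ∧ ∀ i : ℕ, ((lam : ℂ) - ((i:ℂ)+1)^2) * inner ℂ (sL ((i:ℤ)+1)) y
        = inner ℂ (sL ((i:ℤ)+1)) (Q y) := by
  have hpi := Real.pi_pos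
  have hmul : ∀ v : ℝ → ℂ, IntervalIntegrable v volume 0 Real.pi →
      IntervalIntegrable (fun x => (q0 x : ℂ) * v x) volume 0 Real.pi := by
    intro v hv
    rw [intervalIntegrable_iff_integrableOn_Ioc_of_le hpi.le] at hv ⊢
    refine Integrable.bdd_mul (c := M) hv (Complex.measurable_ofReal.comp hq).aestronglyMeasurable ?_
    refine Filter.Eventually.of_forall fun x => ?_
    simpa using hM x
  have hmulsn : ∀ (m : ℤ) (v : ℝ → ℂ), IntervalIntegrable v volume 0 Real.pi →
      IntervalIntegrable (fun x => sn m x * v x) volume 0 Real.pi := fun m v hv =>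
    hv.continuousOn_mul (sn_cont m).continuousOn
  have hsplit : ∀ (m : ℤ) (v : ℝ → ℂ), IntervalIntegrable v volume 0 Real.pi →
      ∫ x in (0:ℝ)..Real.pi, sn m x * (((q0 x : ℂ) - lam) * v x) =
      (∫ x in (0:ℝ)..Real.pi, sn m x * ((q0 x : ℂ) * v x)) -
        lam * ∫ x in (0:ℝ)..Real.pi, sn m x * v x := by
    intro m v hv
    rw [← intervalIntegral.integral_const_mul, ← intervalIntegral.integral_sub
      (hmulsn m _ (hmul v hv)) ((hmulsn m v hv).const_mul _)]
    congr 1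
    funext x
    ring
  have hintv : ∀ v : HH, IntervalIntegrable v volume 0 Real.pi := by
    intro v
    rw [intervalIntegrable_iff_integrableOn_Ioc_of_le hpi.le]
    exact (Lp.memLp v).integrable (by norm_num)
  constructor
  · rintro ⟨y, g, ⟨x0, hx0, hyx0⟩, hgi, hfi, hyg, hgf, hy0, hypi⟩
    have hyc : ContinuousOn y (Set.Icc 0 Real.pi) :=
      (ibp_complex g y (fun x => x) (fun _ => 1) hgi hyg (fun x => hasDerivAt_id x)
        continuous_const).1
    have hym := memLp_of_contOn y hyc
    have hyi : IntervalIntegrable y volume 0 Real.pi := by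
      rw [intervalIntegrable_iff_integrableOn_Ioc_of_le hpi.le]
      exact hym.integrable (by norm_num)
    refine ⟨hym.toLp y, ?_, fun i => ?_⟩
    · intro h0
      have h1 : y =ᵐ[mu0] (0 : ℝ → ℂ) := (MemLp.toLp_eq_toLp_iff hym MemLp.zero).mp
        (by rw [h0]; exact (MemLp.toLp_zero _).symm)
      have h2 : y =ᵐ[volume.restrict (Set.Icc 0 Real.pi)] (0 : ℝ → ℂ) := by
        rw [← restrict_Ioc_eq_restrict_Icc]; exact h1
      exact hyx0 (Measure.eqOn_Icc_of_ae_eq volume hpi.ne h2 hyc continuousOn_const hx0)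
    · rw [inner_sL _ _ y hym.coeFn_toLp, inner_sL _ (Q (hym.toLp y)) (fun x => (q0 x : ℂ) * y x)]
      · have h1 := ibp_sine _ g y hfi hgi hgf hyg hy0 hypi ((i:ℤ)+1)
        rw [hsplit _ _ hyi] at h1
        push_cast at h1
        linear_combination -h1
      · filter_upwards [hQ (hym.toLp y), hym.coeFn_toLp] with x h1 h2
        rw [h1, h2]
  · rintro ⟨v, hv0, hv⟩
    set f : ℝ → ℂ := fun x => ((q0 x : ℂ) - lam) * v x with hfdef
    have hfi : IntervalIntegrable f volume 0 Real.pi := by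
      have := (hmul v (hintv v)).sub ((hintv v).const_mul (lam:ℂ))
      convert this using 1
      funext x
      simp [hfdef]; ring
    set G : ℝ → ℂ := fun x => ∫ t in (0:ℝ)..x, f t with hG
    have hGc : ContinuousOn G (Set.Icc 0 Real.pi) := by
      have := intervalIntegral.continuousOn_primitive_interval' hfi (a := 0) (by simp)
      rwa [Set.uIcc_of_le hpi.le] at this
    have hGi : IntervalIntegrable G volume 0 Real.pi := by
      apply ContinuousOn.intervalIntegrable
      rwa [Set.uIcc_of_le hpi.le]
    set g0 : ℂ := -(∫ t in (0:ℝ)..Real.pi, G t) / Real.pi with hg0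
    set g : ℝ → ℂ := fun x => g0 + G x with hg
    have hgi : IntervalIntegrable g volume 0 Real.pi := intervalIntegrable_const.add hGi
    set y : ℝ → ℂ := fun x => ∫ t in (0:ℝ)..x, g t with hy
    have hy0 : y 0 = 0 := by simp [hy]
    have hG0 : G 0 = 0 := by simp [hG]
    have hpic : (Real.pi : ℂ) ≠ 0 := by exact_mod_cast hpi.ne'
    have hypi : y Real.pi = 0 := by
      simp only [hy, hg]
      rw [intervalIntegral.integral_add intervalIntegrable_const hGi,
        intervalIntegral.integral_const, hg0, sub_zero, Complex.real_smul]
      field_simp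
      ring
    have hgf : ∀ x ∈ Set.Icc (0:ℝ) Real.pi, g x = g 0 + ∫ t in (0:ℝ)..x, f t := by
      intro x _
      simp only [hg, hG0, add_zero]; rfl
    have hyg : ∀ x ∈ Set.Icc (0:ℝ) Real.pi, y x = y 0 + ∫ t in (0:ℝ)..x, g t := by
      intro x _
      rw [hy0, zero_add]
    have hyc : ContinuousOn y (Set.Icc 0 Real.pi) :=
      (ibp_complex g y (fun x => x) (fun _ => 1) hgi hyg (fun x => hasDerivAt_id x)
        continuous_const).1
    have hym := memLp_of_contOn y hyc
    have hyv : hym.toLp y = v := by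
      rw [← sub_eq_zero]
      apply sL_complete
      intro i
      rw [inner_sub_right, sub_eq_zero]
      have h1 := ibp_sine f g y hfi hgi hgf hyg hy0 hypi ((i:ℤ)+1)
      have h2 := hv i
      rw [inner_sL _ (Q v) _ (hQ v)] at h2
      rw [hfdef, hsplit _ _ (hintv v), ← inner_sL _ v v (Filter.EventuallyEq.refl _ _), ← h2,
        ← inner_sL _ _ y hym.coeFn_toLp] at h1
      have h3 : -((i:ℂ)+1)^2 ≠ 0 := by
        rw [neg_ne_zero]
        exact pow_ne_zero _ (by exact_mod_cast Nat.succ_ne_zero i)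
      apply mul_left_cancel₀ h3
      push_cast at h1
      linear_combination -h1
    have hae : y =ᵐ[mu0] v := by
      have := hym.coeFn_toLp
      rw [hyv] at this
      exact this.symm
    have hfy : (fun t => ((q0 t : ℂ) - lam) * y t) =ᵐ[mu0] f := by
      filter_upwards [hae] with x hx
      rw [hx]
    refine ⟨y, g, ?_, hgi, ?_, hyg, ?_, hy0, hypi⟩
    · by_contra hcon
      push Not at hcon
      apply hv0
      rw [← hyv, ← MemLp.toLp_zero (MemLp.zero : MemLp (0 : ℝ → ℂ) 2 mu0), MemLp.toLp_eq_toLp_iff]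
      filter_upwards [ae_restrict_mem measurableSet_Ioc] with x hx
      exact hcon x (Set.Ioc_subset_Icc_self hx)
    · rw [intervalIntegrable_iff_integrableOn_Ioc_of_le hpi.le] at hfi ⊢
      exact (integrable_congr hfy).mpr hfi
    · intro x hx
      rw [hgf x hx, intervalIntegral.integral_of_le hx.1, intervalIntegral.integral_of_le hx.1]
      congr 1
      apply integral_congr_ae
      exact Filter.EventuallyEq.symm (f := fun t => ((q0 t : ℂ) - lam) * y t)
        (ae_restrict_of_ae_restrict_of_subset (Set.Ioc_subset_Ioc_right hx.2) hfy)

/-! ### Matrix elements and the final assembly -/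

lemma cosCoef_neg (q0 : ℝ → ℝ) (k : ℤ) : cosCoefR q0 (-k) = cosCoefR q0 k := by
  unfold cosCoefR
  congr 2
  funext x
  push_cast
  rw [neg_mul, Real.cos_neg]

lemma cosCoef_bound (q0 : ℝ → ℝ) (M : ℝ) (hM : ∀ x, |q0 x| ≤ M) (k : ℤ) :
    |cosCoefR q0 k| ≤ M := by
  have hpi := Real.pi_pos
  unfold cosCoefR
  have h := intervalIntegral.norm_integral_le_of_norm_le_const (a := 0) (b := Real.pi) (C := M)
    (f := fun x => q0 x * Real.cos (k * x)) (fun x _ => by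
      rw [norm_mul, Real.norm_eq_abs, Real.norm_eq_abs]
      calc |q0 x| * |Real.cos (k * x)| ≤ M * 1 :=
            mul_le_mul (hM x) (Real.abs_cos_le_one _) (abs_nonneg _) ((abs_nonneg _).trans (hM x))
        _ = M := mul_one M)
  rw [Real.norm_eq_abs, sub_zero, abs_of_pos hpi] at h
  rw [abs_mul, abs_of_pos (by positivity : 0 < 1 / Real.pi)]
  calc _ ≤ 1 / Real.pi * (M * Real.pi) := by gcongr
    _ = M := by field_simp

lemma matrix_el (q0 : ℝ → ℝ) (hq : IntervalIntegrable q0 volume 0 Real.pi)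
    (Q : HH →L[ℂ] HH) (hQ : ∀ v : HH, Q v =ᵐ[mu0] fun x => (q0 x : ℂ) * v x) (m l : ℤ) :
    inner ℂ (sL m) (Q (sL l)) = ((cosCoefR q0 (m - l) - cosCoefR q0 (m + l) : ℝ) : ℂ) := by
  rw [← sn_mul_sn q0 hq, inner_sL m _ (fun x => (q0 x : ℂ) * sn l x)]
  filter_upwards [hQ (sL l), (sn_memLp l).coeFn_toLp] with x h1 h2
  rw [h1]
  unfold sL
  rw [h2]

lemma step_eq (q0 : ℝ → ℝ) (hq : IntervalIntegrable q0 volume 0 Real.pi)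
    (M : ℝ) (hM : ∀ x, |q0 x| ≤ M)
    (Q S : HH →L[ℂ] HH) (hQ : ∀ v : HH, Q v =ᵐ[mu0] fun x => (q0 x : ℂ) * v x)
    (b : HilbertBasis ℕ ℂ HH) (hb : ∀ i : ℕ, b i = sL ((i:ℤ)+1))
    (s : ℤ → ℝ) (hs : Summable fun l => |s l|) (hse : ∀ l, s (-l) = s l)
    (hS : ∀ x i, b.repr (S x) i = (s ((i:ℤ)+1) : ℂ) * b.repr x i) (w : HH) (m : ℤ) :
    inner ℂ (sL m) (Q (S w)) =
      ∑' l : ℤ, (cosCoefR q0 l : ℂ) * (s (m + l) : ℂ) * inner ℂ (sL (m + l)) w := by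
  have hM0 : 0 ≤ M := (abs_nonneg _).trans (hM 0)
  set C := cosCoefR q0 with hC
  have h1 : HasSum (fun i : ℕ => (s ((i:ℤ)+1) : ℂ) * inner ℂ (sL ((i:ℤ)+1)) w *
      ((C (m - (i+1)) - C (m + (i+1)) : ℝ) : ℂ)) (inner ℂ (sL m) (Q (S w))) := by
    have := (b.hasSum_repr (S w)).mapL ((innerSL ℂ (sL m)) ∘L Q)
    simp only [ContinuousLinearMap.comp_apply, map_smul, innerSL_apply_apply, smul_eq_mul, hb,
      matrix_el q0 hq Q hQ, hS] at this
    have hr : ∀ i, b.repr w i = inner ℂ (sL ((i:ℤ)+1)) w := fun i => by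
      rw [b.repr_apply_apply, hb]
    simp only [hr] at this
    exact this
  let f : ℤ → ℂ := fun l => (C (l - m) : ℂ) * (s l : ℂ) * inner ℂ (sL l) w
  have hsL : ∀ l, ‖sL l‖ ≤ 2 := by
    intro l
    have h2 := inner_sL_sL l l
    have h3 := inner_self_eq_norm_sq_to_K (𝕜 := ℂ) (sL l)
    rw [h2] at h3
    have h4 : ((if l - l = 0 then 1 else 0) - (if l + l = 0 then 1 else 0) : ℝ) = ‖sL l‖^2 := by
      apply Complex.ofReal_injective
      refine h3.trans ?_
      exact (Complex.ofReal_pow _ _).symm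
    have h5 : ‖sL l‖^2 ≤ 1 := by
      rw [← h4]; split_ifs <;> norm_num
    nlinarith [norm_nonneg (sL l)]
  have hf : Summable f := by
    refine Summable.of_norm_bounded ((hs.mul_left (M * (2 * ‖w‖)))) fun l => ?_
    simp only [f, norm_mul, Complex.norm_real, Real.norm_eq_abs]
    calc |C (l - m)| * |s l| * ‖inner ℂ (sL l) w‖ ≤ M * |s l| * (2 * ‖w‖) := by
          gcongr
          · exact cosCoef_bound q0 M hM _
          · exact (norm_inner_le_norm _ _).trans (by gcongr; exact hsL l)
      _ = _ := by ring
  have hf0 : f 0 = 0 := by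
    have := sL_neg 0
    rw [neg_zero] at this
    have h2 : inner ℂ (sL 0) w = - inner ℂ (sL 0) w := by
      conv_lhs => rw [this]
      rw [inner_neg_left]
    simp only [f, self_eq_neg.mp h2, mul_zero]
  have inj1 : Function.Injective (fun i : ℕ => (i:ℤ)+1) := fun i j h => by
    simp only at h; omega
  have inj2 : Function.Injective (fun i : ℕ => -((i:ℤ)+1)) := fun i j h => by
    simp only at h; omega
  have hf1 : Summable (fun i : ℕ => f ((i:ℤ)+1)) := hf.comp_injective inj1
  have hf2 : Summable (fun i : ℕ => f (-((i:ℤ)+1))) := hf.comp_injective inj2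
  have hshift : ∑' l : ℤ, (C l : ℂ) * (s (m + l) : ℂ) * inner ℂ (sL (m + l)) w = ∑' l, f l := by
    rw [← (Equiv.addLeft m).tsum_eq f]
    apply tsum_congr
    intro l
    simp [f]
  rw [hshift, tsum_of_add_one_of_neg_add_one hf1 hf2, hf0, add_zero, ← hf1.tsum_add hf2,
    ← h1.tsum_eq]
  apply tsum_congr
  intro i
  simp only [f]
  rw [sL_neg, inner_neg_left, hse, show (i:ℤ) + 1 - m = -(m - (i+1)) by ring,
    show -((i:ℤ) + 1) - m = -(m + (i+1)) by ring, hC, cosCoef_neg, cosCoef_neg]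
  push_cast
  ring

lemma U_eq (q0 : ℝ → ℝ) (hq : IntervalIntegrable q0 volume 0 Real.pi)
    (M : ℝ) (hM : ∀ x, |q0 x| ≤ M)
    (Q S : HH →L[ℂ] HH) (hQ : ∀ v : HH, Q v =ᵐ[mu0] fun x => (q0 x : ℂ) * v x)
    (b : HilbertBasis ℕ ℂ HH) (hb : ∀ i : ℕ, b i = sL ((i:ℤ)+1))
    (s : ℤ → ℝ) (hs : Summable fun l => |s l|) (hse : ∀ l, s (-l) = s l)
    (hS : ∀ x i, b.repr (S x) i = (s ((i:ℤ)+1) : ℂ) * b.repr x i) (n : ℤ) (k : ℕ) (m : ℤ) :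
    inner ℂ (sL m) (Q (((S * Q)^k) (sL n))) = ((∑' v, pG (cosCoefR q0) s n k m v : ℝ) : ℂ) := by
  induction k generalizing m with
  | zero =>
    rw [pow_zero, tsum_fintype]
    simp only [Finset.univ_unique, Finset.sum_singleton, ContinuousLinearMap.one_apply]
    rw [matrix_el q0 hq Q hQ]
    simp [pG]
  | succ k ih =>
    have : ((S * Q)^(k+1)) (sL n) = S (Q (((S * Q)^k) (sL n))) := by
      rw [pow_succ']; rfl
    rw [this, step_eq q0 hq M hM Q S hQ b hb s hs hse hS,
      pG_rec (cosCoefR q0) s n M (cosCoef_bound q0 M hM) hs, Complex.ofReal_tsum]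
    apply tsum_congr
    intro l
    rw [ih]
    push_cast
    rfl

lemma gap (M lam : ℝ) (n : ℕ) (hn : 1 ≤ n) (hM0 : 0 ≤ M) (hcond : Cond1 M n)
    (hlam : lam ∈ Set.Icc ((n : ℝ)^2 - M) ((n : ℝ)^2 + M)) :
    ∃ D, M < D ∧ ∀ m : ℕ, 1 ≤ m → m ≠ n → D ≤ |lam - (m:ℝ)^2| := by
  obtain ⟨h1, h2⟩ := hcond
  obtain ⟨hl1, hl2⟩ := hlam
  rcases hn.eq_or_lt with h | h
  · subst h
    have hM := h1 rfl
    refine ⟨2, by linarith, fun m hm hm1 => ?_⟩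
    have hm2 : (2:ℝ) ≤ m := by exact_mod_cast (show 2 ≤ m by omega)
    push_cast at hl2
    rw [abs_sub_comm]
    exact le_trans (by nlinarith) (le_abs_self _)
  · have hM := h2 h
    refine ⟨2 * n - 1 - M, by linarith, fun m hm hmn => ?_⟩
    have hm1 : (1:ℝ) ≤ m := by exact_mod_cast hm
    rcases lt_or_gt_of_ne hmn with hlt | hgt
    · have : (m:ℝ) + 1 ≤ n := by exact_mod_cast hlt
      exact le_trans (by nlinarith) (le_abs_self _)
    · have : (n:ℝ) + 1 ≤ m := by exact_mod_cast hgt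
      rw [abs_sub_comm]
      exact le_trans (by nlinarith) (le_abs_self _)

lemma ev_congr (q q0 : ℝ → ℝ) (h : ∀ x ∈ Set.Icc (0:ℝ) Real.pi, q x = q0 x) (lam : ℂ)
    (hE : IsDirichletEV (fun x => (q x : ℂ)) lam) : IsDirichletEV (fun x => (q0 x : ℂ)) lam := by
  obtain ⟨y, g, h1, h2, h3, h4, h5, h6, h7⟩ := hE
  refine ⟨y, g, h1, h2, ?_, h4, ?_, h6, h7⟩
  · refine h3.congr fun x hx => ?_
    rw [Set.uIoc_of_le Real.pi_pos.le] at hx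
    simp only [h x (Set.Ioc_subset_Icc_self hx)]
  · intro x hx
    rw [h5 x hx]
    congr 1
    apply intervalIntegral.integral_congr
    intro t ht
    rw [Set.uIcc_of_le hx.1] at ht
    simp only [h t ⟨ht.1, ht.2.trans hx.2⟩]

lemma main_q0 (q0 : ℝ → ℝ) (hqm : Measurable q0) (M : ℝ) (hM : ∀ x, |q0 x| ≤ M)
    (hC0 : cosCoefR q0 0 = 0) (n : ℕ) (hn : 1 ≤ n) (hcond : Cond1 M n) (lam : ℝ)
    (hlam : lam ∈ Set.Icc ((n : ℝ)^2 - M) ((n : ℝ)^2 + M)) :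
    IsDirichletEV (fun x => (q0 x : ℂ)) (lam : ℂ) ↔
      (Summable (fun k : ℕ => aSum (cosCoefR q0) n (k + 1) lam) ∧
        lam - (n : ℝ)^2 + cosCoefR q0 (2 * n) -
          (∑' k : ℕ, aSum (cosCoefR q0) n (k + 1) lam) = 0) := by
  have hpi := Real.pi_pos
  have hM0 : 0 ≤ M := (abs_nonneg _).trans (hM 0)
  obtain ⟨D, hMD, hD⟩ := gap M lam n hn hM0 hcond hlam
  have hD0 : 0 < D := by linarith
  obtain ⟨Q, hQn, hQ⟩ := exists_mulOp q0 hqm M hM0 hM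
  obtain ⟨b, hb⟩ := exists_sineBasis
  have hqi : IntervalIntegrable q0 volume 0 Real.pi := by
    rw [intervalIntegrable_iff_integrableOn_Ioc_of_le hpi.le]
    exact Measure.integrableOn_of_bounded (M := M) (by simp) hqm.aestronglyMeasurable
      (Filter.Eventually.of_forall fun x => by simpa using hM x)
  set s : ℤ → ℝ := fun l => if l = (n:ℤ) ∨ l = -(n:ℤ) then 0 else (lam - (l:ℝ)^2)⁻¹ with hsdef
  have hssum : Summable fun l => |s l| := summable_s n lam
  have hse : ∀ l, s (-l) = s l := by
    intro l
    simp only [hsdef, neg_inj, Int.cast_neg, neg_sq]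
    congr 1
    rw [neg_eq_iff_eq_neg, or_comm]
  obtain ⟨j, rfl⟩ : ∃ j, n = j + 1 := ⟨n - 1, by omega⟩
  have hsj : s ((j:ℤ)+1) = 0 := by simp [hsdef]
  have hsi : ∀ i : ℕ, i ≠ j → s ((i:ℤ)+1) = (lam - ((i:ℝ)+1)^2)⁻¹ := by
    intro i hi
    simp only [hsdef]
    rw [if_neg (by push_cast; omega)]
    push_cast; rfl
  have hDi : ∀ i : ℕ, i ≠ j → D ≤ |lam - ((i:ℝ)+1)^2| := by
    intro i hi
    have := hD (i+1) (by omega) (by omega)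
    push_cast at this
    exact this
  obtain ⟨S, hSn, hS⟩ := exists_diag b (fun i : ℕ => (s ((i:ℤ)+1) : ℂ)) D⁻¹ (by positivity) (by
    intro i
    rw [Complex.norm_real, Real.norm_eq_abs]
    by_cases hi : i = j
    · rw [hi, hsj]; simp; positivity
    · rw [hsi i hi, abs_inv]
      gcongr
      exact hDi i hi)
  have hT : ‖S * Q‖ < 1 := by
    calc ‖S * Q‖ ≤ ‖S‖ * ‖Q‖ := norm_mul_le _ _
      _ ≤ D⁻¹ * M := by gcongr
      _ < 1 := by rw [inv_mul_lt_iff₀ hD0]; linarith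
  obtain ⟨hA1, hA2⟩ := abstract_eq b Q S (fun i : ℕ => (s ((i:ℤ)+1) : ℂ))
    (fun i : ℕ => (lam : ℂ) - ((i:ℂ)+1)^2) j hS (by simp only [hsj]; simp) (by
      intro i hi
      have h0 : lam - ((i:ℝ)+1)^2 ≠ 0 := by
        intro h; have := hDi i hi; rw [h, abs_zero] at this; linarith
      have h1 : s ((i:ℤ)+1) * (lam - ((i:ℝ)+1)^2) = 1 := by
        rw [hsi i hi]; exact inv_mul_cancel₀ h0
      have h2 := congrArg (fun r : ℝ => (r:ℂ)) h1
      push_cast at h2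
      exact h2) hT
  have hX : ∀ k : ℕ, b.repr (Q (((S * Q)^k) (b j))) j =
      ((∑' v, pG (cosCoefR q0) s ((j:ℤ)+1) k ((j:ℤ)+1) v : ℝ) : ℂ) := by
    intro k
    rw [b.repr_apply_apply, hb, U_eq q0 hqi M hM Q S hQ b hb s hssum hse hS]
  have hXs : ∀ k : ℕ, b.repr (Q (((S * Q)^k) (b j))) j =
      ((∑' v, aTerm (cosCoefR q0) (j+1) k lam v : ℝ) : ℂ) := by
    intro k
    rw [hX]
    congr 1
    apply tsum_congr
    intro v
    have := pG_eq_aTerm (cosCoefR q0) (j+1) k lam v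
    rw [← this]
    push_cast
    rfl
  have hX0 : b.repr (Q (((S * Q)^0) (b j))) j = ((-cosCoefR q0 (2 * ((j+1 : ℕ):ℤ)) : ℝ) : ℂ) := by
    rw [pow_zero, b.repr_apply_apply, hb, ContinuousLinearMap.one_apply,
      matrix_el q0 hqi Q hQ, sub_self, hC0, zero_sub]
    congr 3
    push_cast; ring
  simp only [b.repr_apply_apply, hb] at hA2
  rw [eigen_iff q0 hqm M hM lam Q hQ, hA2]
  simp only [← hb, ← b.repr_apply_apply]
  have hA3 : Summable (fun k : ℕ => aSum (cosCoefR q0) (j+1) (k + 1) lam) := by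
    have := (summable_nat_add_iff 1).mpr hA1
    simp only [hXs] at this
    exact Complex.summable_ofReal.mp this
  rw [hA1.tsum_eq_zero_add, hX0]
  have hsum : ∑' k : ℕ, b.repr (Q (((S * Q)^(k+1)) (b j))) j =
      ((∑' k : ℕ, aSum (cosCoefR q0) (j+1) (k + 1) lam : ℝ) : ℂ) := by
    rw [Complex.ofReal_tsum]
    apply tsum_congr
    intro k
    rw [hXs]
    rfl
  rw [hsum]
  constructor
  · intro h
    refine ⟨hA3, ?_⟩
    have h2 : -cosCoefR q0 (2 * ((j+1 : ℕ):ℤ)) + ∑' k : ℕ, aSum (cosCoefR q0) (j+1) (k + 1) lam =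
        lam - ((j:ℝ)+1)^2 := by
      apply Complex.ofReal_injective
      rw [Complex.ofReal_add, h, Complex.ofReal_sub, Complex.ofReal_pow, Complex.ofReal_add,
        Complex.ofReal_natCast, Complex.ofReal_one]
    push_cast at h2 ⊢
    linarith
  · rintro ⟨-, h⟩
    have h2 : -cosCoefR q0 (2 * ((j+1 : ℕ):ℤ)) + ∑' k : ℕ, aSum (cosCoefR q0) (j+1) (k + 1) lam =
        lam - ((j:ℝ)+1)^2 := by
      push_cast at h ⊢
      linarith
    rw [← Complex.ofReal_add, h2, Complex.ofReal_sub, Complex.ofReal_pow, Complex.ofReal_add,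
      Complex.ofReal_natCast, Complex.ofReal_one]

/-- Let `q` be the Kronig–Penney potential, `n ≥ 1`, and assume
Condition 1 holds. Then `λ ∈ I_n = [n² − M, n² + M]` is a Dirichlet eigenvalue of `L(q)`
if and only if the series `Σ_{k=1}^∞ a_k(λ)` converges and
`λ − n² + C_{2n} − Σ_{k=1}^∞ a_k(λ) = 0`. -/
theorem stmt2
    (a b c : ℝ) (q : ℝ → ℝ)
    (hc : c ∈ Set.Ioo (0:ℝ) Real.pi) (ha : a < 0) (hb : 0 < b)
    (habc : (b - a) * c = b * Real.pi)
    (hqa : ∀ x ∈ Set.Icc (0:ℝ) c, q x = a)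
    (hqb : ∀ x ∈ Set.Ioc c Real.pi, q x = b)
    (n : ℕ) (hn : 1 ≤ n) (hcond : Cond1 (max |a| b) n)
    (lam : ℝ)
    (hlam : lam ∈ Set.Icc ((n : ℝ)^2 - max |a| b) ((n : ℝ)^2 + max |a| b)) :
    IsDirichletEV (fun x => (q x : ℂ)) (lam : ℂ) ↔
      (Summable (fun k : ℕ => aSum (cosCoefR q) n (k + 1) lam) ∧
        lam - (n : ℝ)^2 + cosCoefR q (2 * n) -
          (∑' k : ℕ, aSum (cosCoefR q) n (k + 1) lam) = 0) := by
  have hpi := Real.pi_pos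
  obtain ⟨hc0, hcpi⟩ := hc
  set q0 : ℝ → ℝ := fun x => if x ≤ c then a else b with hq0
  have hqm : Measurable q0 := Measurable.ite measurableSet_Iic measurable_const measurable_const
  have hM : ∀ x, |q0 x| ≤ max |a| b := by
    intro x
    simp only [hq0]
    split_ifs
    · exact le_max_left _ _
    · rw [abs_of_pos hb]; exact le_max_right _ _
  have hqq : ∀ x ∈ Set.Icc (0:ℝ) Real.pi, q x = q0 x := by
    intro x hx
    simp only [hq0]
    split_ifs with h
    · exact hqa x ⟨hx.1, h⟩
    · exact hqb x ⟨not_le.mp h, hx.2⟩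
  have hcos : cosCoefR q = cosCoefR q0 := by
    funext k
    unfold cosCoefR
    congr 1
    apply intervalIntegral.integral_congr
    intro x hx
    rw [Set.uIcc_of_le hpi.le] at hx
    simp only [hqq x hx]
  have hC0 : cosCoefR q0 0 = 0 := by
    unfold cosCoefR
    simp only [Int.cast_zero, zero_mul, Real.cos_zero, mul_one]
    have e1 : Set.EqOn q0 (fun _ => a) (Set.uIoc 0 c) := by
      intro x hx
      rw [Set.uIoc_of_le hc0.le] at hx
      simp [hq0, hx.2]
    have e2 : Set.EqOn q0 (fun _ => b) (Set.uIoc c Real.pi) := by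
      intro x hx
      rw [Set.uIoc_of_le hcpi.le] at hx
      simp [hq0, hx.1]
    rw [← intervalIntegral.integral_add_adjacent_intervals (b := c)
      (intervalIntegrable_const.congr e1.symm) (intervalIntegrable_const.congr e2.symm),
      intervalIntegral.integral_congr_ae (g := fun _ => a) (Filter.Eventually.of_forall fun x hx => e1 hx),
      intervalIntegral.integral_congr_ae (g := fun _ => b) (Filter.Eventually.of_forall fun x hx => e2 hx)]
    simp only [intervalIntegral.integral_const, smul_eq_mul]
    rw [show (c - 0) * a + (Real.pi - c) * b = 0 by linarith, mul_zero]
  rw [hcos, ← main_q0 q0 hqm _ hM hC0 n hn hcond lam hlam]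
  exact ⟨ev_congr q q0 hqq _, ev_congr q0 q (fun x hx => (hqq x hx).symm) _⟩
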